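/- Let T > 0, let constants 0 < c₂ < c₃ and L > 0 be given, and let F̲, F̄ : [0,T] × ℝ → ℝ satisfy F̲ ≤ F̄ pointwise, with t ↦ F̄(t,y) and t ↦ F̲(t,y) Lebesgue measurable for each y, both F̄(t,·) and F̲(t,·) L-Lipschitz on [−c₃, c₃] for every t, and sup over t ∈ [0,T] and |y| ≤ c₃ of |F̄(t,y)| + |F̲(t,y)| finite. Let h̲ ≤ h̄ be real numbers with |h̲| ≤ c₂ and |h̄| ≤ c₂. Suppose ε > 0 satisfies F̄(t, c₃) ≤ ε and F̲(t, −c₃) ≥ −ε for all t ∈ [0,T], and ε(e^{LT} − 1)/L ≤ c₃ − c₂. Then the two dominating backward ODEs ȳ(t) = h̄ + ∫_t^T F̄(s, ȳ(s)) ds and y̲(t) = h̲ + ∫_t^T F̲(s, y̲(s)) ds admit continuous solutions ȳ, y̲ on [0,T] with −c₃ ≤ y̲(t) ≤ ȳ(t) ≤ c₃ for all t ∈ [0,T]. -/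

import Mathlib

open MeasureTheory Set

/-!
Clamping the state of both generators to `[-c₃, c₃]` makes them globally Lipschitz, so the clamped
equations are solved by a contraction, and it remains to see that the solutions stay in the strip,
where clamping changes nothing. All bounds come from one comparison principle, itself a consequence
of Grönwall's inequality on the interval up to the first time at which the order is restored. It
gives `y̲ ≤ ȳ` directly. For `ȳ ≤ c₃`, the Lipschitz bound and `F̄(t, c₃) ≤ ε` show that `F̄` is
dominated below the level `c₃` by the affine generator `ε + L (c₃ - y)`, whose explicit solution
stays below `c₃` exactly when `ε (e ^ (L T) - 1) / L ≤ c₃ - h̄`; the lower bound is symmetric.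
-/

open scoped NNReal Interval

section CaratheodoryComposition

variable {α E G : Type*} [MeasurableSpace α] {μ : Measure α} [NormedAddCommGroup G]
  {f : α → E → G}

lemma aestronglyMeasurable_comp_simpleFunc (hf : ∀ x, AEStronglyMeasurable (f · x) μ)
    (g : SimpleFunc α E) : AEStronglyMeasurable (fun t => f t (g t)) μ := by
  have hsum : (fun t => f t (g t)) =
      fun t => ∑ x ∈ g.range, (g ⁻¹' {x}).indicator (f · x) t := by
    ext t
    rw [Finset.sum_eq_single (g t) (by simp +contextual [eq_comm]) (by simp)]
    simp
  rw [hsum]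
  exact Finset.aestronglyMeasurable_fun_sum _ fun x _ =>
    (hf x).indicator (g.measurableSet_fiber x)

lemma aestronglyMeasurable_comp_of_ae_continuous [TopologicalSpace E] {g : α → E}
    (hf : ∀ x, AEStronglyMeasurable (f · x) μ) (hcont : ∀ᵐ t ∂μ, Continuous (f t))
    (hg : AEStronglyMeasurable g μ) :
    AEStronglyMeasurable (fun t => f t (g t)) μ := by
  refine aestronglyMeasurable_of_tendsto_ae Filter.atTop
    (fun n => aestronglyMeasurable_comp_simpleFunc hf (hg.stronglyMeasurable_mk.approx n)) ?_
  filter_upwards [hcont, hg.ae_eq_mk] with t hft hgt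
  rw [hgt]
  exact (hft.tendsto _).comp (hg.stronglyMeasurable_mk.tendsto_approx t)

end CaratheodoryComposition

lemma intervalIntegrable_of_mem_Icc {E : Type*} [NormedAddCommGroup E] {q : ℝ → E} {a b s t : ℝ}
    (hq : IntervalIntegrable q volume a b) (hs : s ∈ Icc a b) (ht : t ∈ Icc a b) :
    IntervalIntegrable q volume s t :=
  hq.mono_set (uIcc_of_le (hs.1.trans hs.2) ▸ uIcc_subset_Icc hs ht)

lemma intervalIntegrable_of_norm_le {E : Type*} [NormedAddCommGroup E] {q : ℝ → E} {a b C : ℝ}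
    (hab : a ≤ b) (hq : AEStronglyMeasurable q (volume.restrict (Icc a b)))
    (hC : ∀ t ∈ Icc a b, ‖q t‖ ≤ C) : IntervalIntegrable q volume a b := by
  rw [intervalIntegrable_iff_integrableOn_Icc_of_le hab]
  exact .of_bound measure_Icc_lt_top hq C ((ae_restrict_mem measurableSet_Icc).mono hC)

lemma intervalIntegrable_comp_of_lipschitzWith {E G : Type*} [NormedAddCommGroup E]
    [NormedAddCommGroup G] {f : ℝ → E → G} {a b : ℝ} {K : ℝ≥0} {y : ℝ → E}
    (hf : ∀ x, IntervalIntegrable (f · x) volume a b)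
    (hLip : ∀ t ∈ Icc a b, LipschitzWith K (f t)) (hab : a ≤ b) (hy : ContinuousOn y (Icc a b)) :
    IntervalIntegrable (fun s => f s (y s)) volume a b := by
  have hLip_ae : ∀ᵐ t ∂volume.restrict (Ι a b), LipschitzWith K (f t) := by
    rw [uIoc_of_le hab]
    exact (ae_restrict_mem measurableSet_Ioc).mono fun t ht => hLip t (Ioc_subset_Icc_self ht)
  have hy_int : IntervalIntegrable y volume a b := hy.intervalIntegrable_of_Icc hab
  refine ((hy_int.norm.const_mul (K : ℝ)).add (hf 0).norm).mono_fun'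
    (aestronglyMeasurable_comp_of_ae_continuous (fun x => (hf x).def'.aestronglyMeasurable)
      (hLip_ae.mono fun t ht => ht.continuous) hy_int.def'.aestronglyMeasurable) ?_
  filter_upwards [hLip_ae] with t ht
  calc ‖f t (y t)‖ ≤ ‖f t (y t) - f t 0‖ + ‖f t 0‖ := by
        simpa using norm_add_le (f t (y t) - f t 0) (f t 0)
    _ ≤ K * ‖y t‖ + ‖f t 0‖ := by simpa using ht.norm_sub_le (y t) 0

lemma continuousOn_integral_left {E : Type*} [NormedAddCommGroup E] [NormedSpace ℝ E]
    {q : ℝ → E} {a b : ℝ} (hab : a ≤ b) (hq : IntervalIntegrable q volume a b) :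
    ContinuousOn (fun t => ∫ s in t..b, q s) (Icc a b) := by
  rw [intervalIntegrable_iff_integrableOn_Icc_of_le hab, ← uIcc_of_le hab] at hq
  simpa only [uIcc_of_le hab] using intervalIntegral.continuousOn_primitive_interval_left hq

lemma hasDerivAt_integral_left_of_continuousOn {E : Type*} [NormedAddCommGroup E]
    [NormedSpace ℝ E] [CompleteSpace E] {v : ℝ → E} {a b t : ℝ} (hv : ContinuousOn v (Icc a b))
    (ht : t ∈ Ioo a b) : HasDerivAt (fun t => ∫ s in t..b, v s) (-v t) t :=
  intervalIntegral.integral_hasDerivAt_left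
    ((hv.mono (Icc_subset_Icc_left ht.1.le)).intervalIntegrable_of_Icc ht.2.le)
    ((hv.mono Ioo_subset_Icc_self).stronglyMeasurableAtFilter isOpen_Ioo t ht)
    (hv.continuousAt (Icc_mem_nhds ht.1 ht.2))

lemma le_mul_exp_of_le_add_mul_integral {v : ℝ → ℝ} {a b δ L : ℝ} (hL : 0 ≤ L)
    (hv : ContinuousOn v (Icc a b)) (hle : ∀ t ∈ Icc a b, v t ≤ δ + L * ∫ s in t..b, v s) :
    ∀ t ∈ Icc a b, v t ≤ δ * Real.exp (L * (b - t)) := by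
  intro t ht
  have hab : a ≤ b := ht.1.trans ht.2
  set W : ℝ → ℝ := fun t => δ + L * ∫ s in t..b, v s with hW
  have hW_cont : ContinuousOn W (Icc a b) := by
    have := continuousOn_integral_left hab (hv.intervalIntegrable_of_Icc hab)
    fun_prop
  have hW_deriv : ∀ t ∈ Ioo a b, HasDerivAt W (-(L * v t)) t := fun t ht => by
    simpa [hW] using ((hasDerivAt_integral_left_of_continuousOn hv ht).const_mul L).const_add δ
  have hmono : MonotoneOn (fun t => Real.exp (L * t) * W t) (Icc a b) := by
    refine monotoneOn_of_hasDerivWithinAt_nonneg (convex_Icc a b) (by fun_prop)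
      (f' := fun t => Real.exp (L * t) * L * (W t - v t)) ?_ ?_
    · intro t ht
      rw [interior_Icc] at ht
      have := (((hasDerivAt_id t).const_mul L).exp).mul (hW_deriv t ht)
      refine (this.congr_deriv ?_).hasDerivWithinAt
      simp only [id, mul_one]; ring
    · intro t ht
      have := sub_nonneg.2 (hle t (interior_subset ht))
      positivity
  have hend : Real.exp (L * t) * W t ≤ Real.exp (L * b) * δ := by
    simpa [hW] using hmono ht (right_mem_Icc.2 hab) ht.2
  calc v t ≤ W t := hle t ht
    _ = Real.exp (-(L * t)) * (Real.exp (L * t) * W t) := by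
        rw [← mul_assoc, ← Real.exp_add]; simp
    _ ≤ Real.exp (-(L * t)) * (Real.exp (L * b) * δ) := by gcongr
    _ = δ * Real.exp (L * (b - t)) := by
        rw [← mul_assoc, ← Real.exp_add, mul_comm]; ring_nf

lemma exists_first_nonneg {w : ℝ → ℝ} {a b : ℝ} (hab : a ≤ b) (hw : ContinuousOn w (Icc a b))
    (hb : 0 ≤ w b) : ∃ c ∈ Icc a b, 0 ≤ w c ∧ ∀ s ∈ Ico a c, w s < 0 := by
  have hcompact : IsCompact (Icc a b ∩ w ⁻¹' Ici 0) :=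
    isCompact_Icc.of_isClosed_subset (hw.preimage_isClosed_of_isClosed isClosed_Icc isClosed_Ici)
      inter_subset_left
  obtain ⟨c, ⟨hc, hwc⟩, hleast⟩ := hcompact.exists_isLeast ⟨b, right_mem_Icc.2 hab, hb⟩
  refine ⟨c, hc, hwc, fun s hs => not_le.1 fun hws => ?_⟩
  exact hs.2.not_ge (hleast ⟨⟨hs.1, hs.2.le.trans hc.2⟩, hws⟩)

section Solution

variable {E : Type*} [NormedAddCommGroup E] [NormedSpace ℝ E]
  {F : ℝ → E → E} {a b : ℝ} {h : E} {y : ℝ → E} {K : ℝ≥0}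

/-- `y` solves the backward ODE `y t = h + ∫ s in t..b, F s (y s)` on `[a, b]`. Integrability is
part of the notion, since otherwise the integral could be a junk `0`; continuity of `y` follows. -/
structure IsBackwardSolution (F : ℝ → E → E) (a b : ℝ) (h : E) (y : ℝ → E) : Prop where
  intervalIntegrable : IntervalIntegrable (fun s => F s (y s)) volume a b
  eq_add_integral : ∀ t ∈ Icc a b, y t = h + ∫ s in t..b, F s (y s)

namespace IsBackwardSolution

lemma continuousOn (hab : a ≤ b) (hy : IsBackwardSolution F a b h y) :
    ContinuousOn y (Icc a b) :=
  (continuousOn_const.add (continuousOn_integral_left hab hy.intervalIntegrable)).congr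
    hy.eq_add_integral

lemma const_sub (hy : IsBackwardSolution F a b h y) (c : E) :
    IsBackwardSolution (fun t x => -F t (c - x)) a b (c - h) (fun t => c - y t) where
  intervalIntegrable := by
    simp only [sub_sub_cancel]
    exact hy.intervalIntegrable.neg
  eq_add_integral t ht := by
    simp only [sub_sub_cancel, intervalIntegral.integral_neg]
    rw [hy.eq_add_integral t ht, sub_add_eq_sub_sub, sub_eq_add_neg]

lemma congr {G : ℝ → E → E} (hab : a ≤ b) (hy : IsBackwardSolution F a b h y)
    (hFG : ∀ t ∈ Icc a b, F t (y t) = G t (y t)) : IsBackwardSolution G a b h y where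
  intervalIntegrable := hy.intervalIntegrable.congr fun t ht =>
    hFG t (Ioc_subset_Icc_self (uIoc_of_le hab ▸ ht))
  eq_add_integral t ht := by
    rw [hy.eq_add_integral t ht]
    refine congrArg (h + ·) (intervalIntegral.integral_congr fun s hs => hFG s ?_)
    rw [uIcc_of_le ht.2] at hs
    exact ⟨ht.1.trans hs.1, hs.2⟩

end IsBackwardSolution

lemma norm_integral_comp_sub_le_mul_exp {z : ℝ → E} {t d r : ℝ} (hr : 0 < r) (hd : 0 ≤ d)
    (hLip : ∀ s ∈ Icc t b, LipschitzWith K (F s)) (htb : t ≤ b)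
    (hyz : ∀ s ∈ Icc t b, ‖y s - z s‖ ≤ d * Real.exp (-(r * s))) :
    ‖∫ s in t..b, (F s (y s) - F s (z s))‖ ≤ K / r * d * Real.exp (-(r * t)) := by
  have hbound : ∀ s ∈ Ioc t b,
      ‖F s (y s) - F s (z s)‖ ≤ K * d * Real.exp (-(r * s)) := fun s hs => by
    have hs' := Ioc_subset_Icc_self hs
    calc ‖F s (y s) - F s (z s)‖ ≤ K * ‖y s - z s‖ := (hLip s hs').norm_sub_le _ _
      _ ≤ K * (d * Real.exp (-(r * s))) := by gcongr; exact hyz s hs'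
      _ = K * d * Real.exp (-(r * s)) := by ring
  have hexp : ∫ s in t..b, Real.exp (-(r * s)) =
      r⁻¹ * (Real.exp (-(r * t)) - Real.exp (-(r * b))) := by
    have hscale := intervalIntegral.integral_comp_mul_left (a := t) (b := b) Real.exp
      (neg_ne_zero.2 hr.ne')
    simp only [neg_mul, integral_exp, smul_eq_mul] at hscale
    rw [hscale, inv_neg]
    ring
  calc ‖∫ s in t..b, (F s (y s) - F s (z s))‖
      ≤ ∫ s in t..b, K * d * Real.exp (-(r * s)) :=
        intervalIntegral.norm_integral_le_of_norm_le htb (.of_forall hbound)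
          (Continuous.intervalIntegrable (by fun_prop) _ _)
    _ = K / r * d * (Real.exp (-(r * t)) - Real.exp (-(r * b))) := by
        rw [intervalIntegral.integral_const_mul, hexp]; ring
    _ ≤ K / r * d * Real.exp (-(r * t)) := by
        gcongr; exact sub_le_self _ (Real.exp_pos _).le

theorem exists_eqOn_of_contracting_weighted [CompleteSpace E] (hab : a ≤ b)
    {Φ : (ℝ → E) → ℝ → E} {ρ : ℝ → ℝ} (hρ : Continuous ρ) (hρ_pos : ∀ t, 0 < ρ t) {κ : ℝ≥0}
    (hκ : κ < 1) (hΦ : ∀ y, ContinuousOn y (Icc a b) → ContinuousOn (Φ y) (Icc a b))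
    (hcontr : ∀ y z d, ContinuousOn y (Icc a b) → ContinuousOn z (Icc a b) → 0 ≤ d →
      (∀ t ∈ Icc a b, ‖y t - z t‖ ≤ d * ρ t) → ∀ t ∈ Icc a b, ‖Φ y t - Φ z t‖ ≤ κ * d * ρ t) :
    ∃ y, ContinuousOn y (Icc a b) ∧ EqOn y (Φ y) (Icc a b) := by
  let weighted (u : C(Icc a b, E)) (t : ℝ) : E := ρ t • IccExtend hab u t
  have weighted_cont (u : C(Icc a b, E)) : ContinuousOn (weighted u) (Icc a b) :=
    (hρ.smul u.continuous.Icc_extend').continuousOn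
  let Ψ (u : C(Icc a b, E)) : C(Icc a b, E) :=
    { toFun := fun t => (ρ t)⁻¹ • Φ (weighted u) t
      continuous_toFun :=
        ((hρ.comp continuous_subtype_val).inv₀ fun t : Icc a b => (hρ_pos t).ne').smul
          (hΦ _ (weighted_cont u)).domRestrict }
  have weighted_dist (u v : C(Icc a b, E)) (t : ℝ) :
      ‖weighted u t - weighted v t‖ ≤ dist u v * ρ t := by
    rw [← smul_sub, norm_smul_of_nonneg (hρ_pos t).le, mul_comm, ← dist_eq_norm]
    exact mul_le_mul_of_nonneg_right (ContinuousMap.dist_apply_le_dist _) (hρ_pos t).le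
  have Ψ_contracting : ContractingWith κ Ψ := by
    refine ⟨hκ, LipschitzWith.of_dist_le_mul fun u v => ?_⟩
    refine (ContinuousMap.dist_le (by positivity)).2 fun t => ?_
    have hΦ_dist := hcontr _ _ _ (weighted_cont u) (weighted_cont v) dist_nonneg
      (fun s _ => weighted_dist u v s) t t.2
    calc dist (Ψ u t) (Ψ v t) = (ρ t)⁻¹ * ‖Φ (weighted u) t - Φ (weighted v) t‖ := by
          rw [dist_eq_norm, ← norm_smul_of_nonneg (inv_nonneg.2 (hρ_pos t).le), smul_sub]; rfl
      _ ≤ κ * dist u v := by rwa [inv_mul_le_iff₀ (hρ_pos t), mul_comm (ρ t)]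
  obtain ⟨u, hu⟩ : ∃ u, Ψ u = u := ⟨_, Ψ_contracting.fixedPoint_isFixedPt⟩
  refine ⟨weighted u, weighted_cont u, fun t ht => ?_⟩
  have hut : (ρ t)⁻¹ • Φ (weighted u) t = u ⟨t, ht⟩ := DFunLike.congr_fun hu ⟨t, ht⟩
  change ρ t • IccExtend hab u t = _
  rw [IccExtend_of_mem hab u ht, ← hut, smul_inv_smul₀ (hρ_pos t).ne']

theorem exists_isBackwardSolution [CompleteSpace E] (hab : a ≤ b)
    (hint : ∀ x, IntervalIntegrable (F · x) volume a b)
    (hLip : ∀ t ∈ Icc a b, LipschitzWith K (F t)) (h : E) :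
    ∃ y, IsBackwardSolution F a b h y := by
  have hcomp (y : ℝ → E) (hy : ContinuousOn y (Icc a b)) :
      IntervalIntegrable (fun s => F s (y s)) volume a b :=
    intervalIntegrable_comp_of_lipschitzWith hint hLip hab hy
  -- The weight `e ^ (-(K + 1) t)` makes the integral operator contract on all of `[a, b]` at once.
  obtain ⟨y, hy, hfix⟩ := exists_eqOn_of_contracting_weighted (κ := K / (K + 1)) hab
    (Φ := fun y t => h + ∫ s in t..b, F s (y s)) (ρ := fun t => Real.exp (-((K + 1) * t)))
    (by fun_prop) (fun t => Real.exp_pos _) ((div_lt_one (by positivity)).2 (lt_add_one K))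
    (fun y hy => continuousOn_const.add (continuousOn_integral_left hab (hcomp y hy)))
    (fun y z d hy hz hd hyz t ht => by
      have hsub : Icc t b ⊆ Icc a b := Icc_subset_Icc_left ht.1
      have hb : b ∈ Icc a b := right_mem_Icc.2 hab
      rw [add_sub_add_left_eq_sub, ← intervalIntegral.integral_sub
        (intervalIntegrable_of_mem_Icc (hcomp y hy) ht hb)
        (intervalIntegrable_of_mem_Icc (hcomp z hz) ht hb)]
      exact norm_integral_comp_sub_le_mul_exp (by positivity) hd (fun s hs => hLip s (hsub hs))
        ht.2 fun s hs => hyz s (hsub hs))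
  exact ⟨y, hcomp y hy, hfix⟩

end Solution

lemma nonneg_of_eq_add_integral {w q : ℝ → ℝ} {a b β L : ℝ} (hL : 0 ≤ L) (hβ : 0 ≤ β)
    (hq : IntervalIntegrable q volume a b) (hw : ∀ t ∈ Icc a b, w t = β + ∫ s in t..b, q s)
    (hwq : ∀ t ∈ Icc a b, w t < 0 → L * w t ≤ q t) : ∀ t ∈ Icc a b, 0 ≤ w t := by
  intro t₀ ht₀
  have hab : a ≤ b := ht₀.1.trans ht₀.2
  have hb : b ∈ Icc a b := right_mem_Icc.2 hab
  have hw_cont : ContinuousOn w (Icc a b) :=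
    (continuousOn_const.add (continuousOn_integral_left hab hq)).congr hw
  have hwb : 0 ≤ w b := by simpa [hw b hb] using hβ
  obtain ⟨c, hc, hwc, hneg⟩ :=
    exists_first_nonneg ht₀.2 (hw_cont.mono (Icc_subset_Icc_left ht₀.1)) hwb
  have hcab : c ∈ Icc a b := ⟨ht₀.1.trans hc.1, hc.2⟩
  have hsub : Icc t₀ c ⊆ Icc a b := Icc_subset_Icc ht₀.1 hc.2
  have hgronwall : ∀ t ∈ Icc t₀ c, -w t ≤ 0 + L * ∫ s in t..c, -w s := fun t ht => by
    have hsplit : w t = w c + ∫ s in t..c, q s := by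
      rw [hw t (hsub ht), hw c hcab, ← intervalIntegral.integral_add_adjacent_intervals
        (intervalIntegrable_of_mem_Icc hq (hsub ht) hcab)
        (intervalIntegrable_of_mem_Icc hq hcab hb)]
      ring
    have hle : ∫ s in t..c, L * w s ≤ ∫ s in t..c, q s := by
      refine intervalIntegral.integral_mono_on_of_le_Ioo ht.2 ?_
        (intervalIntegrable_of_mem_Icc hq (hsub ht) hcab) fun s hs => ?_
      · exact ((hw_cont.mono ((Icc_subset_Icc_left ht.1).trans hsub)).intervalIntegrable_of_Icc
          ht.2).const_mul L
      · exact hwq s (hsub ⟨ht.1.trans hs.1.le, hs.2.le⟩) (hneg s ⟨ht.1.trans hs.1.le, hs.2⟩)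
    rw [intervalIntegral.integral_const_mul] at hle
    rw [intervalIntegral.integral_neg]
    linarith
  have := le_mul_exp_of_le_add_mul_integral hL (hw_cont.mono hsub).neg hgronwall t₀
    (left_mem_Icc.2 hc.1)
  simpa using this

namespace IsBackwardSolution

variable {F G : ℝ → ℝ → ℝ} {a b α β : ℝ} {u v : ℝ → ℝ}

theorem le_of_le_of_lipschitzWith {K : ℝ≥0} (hu : IsBackwardSolution F a b α u)
    (hv : IsBackwardSolution G a b β v) (hLip : ∀ t ∈ Icc a b, LipschitzWith K (F t))
    (hαβ : α ≤ β) (hFG : ∀ t ∈ Icc a b, F t (v t) ≤ G t (v t)) : ∀ t ∈ Icc a b, u t ≤ v t := by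
  have hdiff : ∀ t ∈ Icc a b,
      v t - u t = (β - α) + ∫ s in t..b, (G s (v s) - F s (u s)) := fun t ht => by
    have hb : b ∈ Icc a b := right_mem_Icc.2 (ht.1.trans ht.2)
    rw [intervalIntegral.integral_sub (intervalIntegrable_of_mem_Icc hv.intervalIntegrable ht hb)
      (intervalIntegrable_of_mem_Icc hu.intervalIntegrable ht hb), hv.eq_add_integral t ht,
      hu.eq_add_integral t ht]
    ring
  have hgrowth : ∀ t ∈ Icc a b, v t - u t < 0 →
      K * (v t - u t) ≤ G t (v t) - F t (u t) := fun t ht hlt => by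
    have hF : |F t (v t) - F t (u t)| ≤ K * |v t - u t| := (hLip t ht).dist_le_mul _ _
    rw [abs_of_neg hlt] at hF
    linarith [neg_abs_le (F t (v t) - F t (u t)), hFG t ht]
  have hnonneg := nonneg_of_eq_add_integral K.coe_nonneg (sub_nonneg.2 hαβ)
    (hv.intervalIntegrable.sub hu.intervalIntegrable) hdiff hgrowth
  exact fun t ht => sub_nonneg.1 (hnonneg t ht)

end IsBackwardSolution

lemma isBackwardSolution_gronwallBound (δ K ε a b : ℝ) :
    IsBackwardSolution (fun _ x => K * x + ε) a b δ (fun t => gronwallBound δ K ε (b - t)) := by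
  have hderiv (t : ℝ) : HasDerivAt (fun t => gronwallBound δ K ε (b - t))
      (-(K * gronwallBound δ K ε (b - t) + ε)) t := by
    simpa using (hasDerivAt_gronwallBound δ K ε (b - t)).comp_const_sub b t
  have hint (s t : ℝ) : IntervalIntegrable (fun t => K * gronwallBound δ K ε (b - t) + ε)
      volume s t := by
    have hcont : Continuous fun t => gronwallBound δ K ε (b - t) :=
      continuous_iff_continuousAt.2 fun t => (hderiv t).continuousAt
    exact Continuous.intervalIntegrable (by fun_prop) s t
  refine ⟨hint a b, fun t _ => ?_⟩
  have hftc := intervalIntegral.integral_eq_sub_of_hasDerivAt (fun s _ => hderiv s) (hint t b).neg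
  simp only [intervalIntegral.integral_neg, sub_self, gronwallBound_x0] at hftc
  linarith

lemma gronwallBound_neg_neg_nonneg_iff {δ L ε x : ℝ} (hL : 0 < L) :
    0 ≤ gronwallBound δ (-L) (-ε) x ↔ ε * (Real.exp (L * x) - 1) / L ≤ δ := by
  have hfactor : gronwallBound δ (-L) (-ε) x =
      Real.exp (-(L * x)) * (δ - ε * (Real.exp (L * x) - 1) / L) := by
    simp only [gronwallBound_of_K_ne_0 (neg_ne_zero.2 hL.ne'), neg_mul, Real.exp_neg]
    field_simp
    ring
  rw [hfactor, mul_nonneg_iff_of_pos_left (Real.exp_pos _), sub_nonneg]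

namespace IsBackwardSolution

variable {F : ℝ → ℝ → ℝ} {a b c h ε : ℝ} {y : ℝ → ℝ} {K : ℝ≥0}

theorem le_const (hK : 0 < K) (hε : 0 ≤ ε) (hy : IsBackwardSolution F a b h y)
    (hLip : ∀ t ∈ Icc a b, LipschitzWith K (F t)) (hc : ∀ t ∈ Icc a b, F t c ≤ ε)
    (hgap : ε * (Real.exp (K * (b - a)) - 1) / K ≤ c - h) : ∀ t ∈ Icc a b, y t ≤ c := by
  set φ : ℝ → ℝ := fun t => gronwallBound (c - h) (-K) (-ε) (b - t)
  have hφ : ∀ t ∈ Icc a b, 0 ≤ φ t := fun t ht => by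
    refine (gronwallBound_neg_neg_nonneg_iff (NNReal.coe_pos.2 hK)).2 (le_trans ?_ hgap)
    gcongr
    exact ht.1
  have hbarrier := (isBackwardSolution_gronwallBound (c - h) (-K) (-ε) a b).const_sub c
  have hle : ∀ t ∈ Icc a b, y t ≤ c - φ t := by
    refine hy.le_of_le_of_lipschitzWith hbarrier hLip (sub_sub_cancel c h).ge fun t ht => ?_
    have hF : |F t (c - φ t) - F t c| ≤ K * |c - φ t - c| := (hLip t ht).dist_le_mul _ _
    rw [sub_sub_cancel_left, abs_neg, abs_of_nonneg (hφ t ht)] at hF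
    change F t (c - φ t) ≤ -(-K * (c - (c - φ t)) + -ε)
    linarith [le_abs_self (F t (c - φ t) - F t c), hc t ht]
  exact fun t ht => (hle t ht).trans (sub_le_self c (hφ t ht))

theorem const_le (hK : 0 < K) (hε : 0 ≤ ε) (hy : IsBackwardSolution F a b h y)
    (hLip : ∀ t ∈ Icc a b, LipschitzWith K (F t)) (hc : ∀ t ∈ Icc a b, -ε ≤ F t c)
    (hgap : ε * (Real.exp (K * (b - a)) - 1) / K ≤ h - c) : ∀ t ∈ Icc a b, c ≤ y t := by
  have hLip_refl : ∀ t ∈ Icc a b, LipschitzWith K fun x => -F t (c - x) := fun t ht => by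
    have hcomp := ((hLip t ht).comp ((LipschitzWith.const c).sub LipschitzWith.id)).neg
    rw [zero_add, mul_one] at hcomp
    exact hcomp
  have hle := (hy.const_sub c).le_const (c := 0) hK hε hLip_refl
    (fun t ht => by simpa using neg_le.1 (hc t ht)) (by simpa using hgap)
  exact fun t ht => sub_nonpos.1 (hle t ht)

end IsBackwardSolution

section Clamp

variable {F : ℝ → ℝ → ℝ} {m M : ℝ} {K : ℝ≥0}

/-- The generator `F` with its state argument clamped to `[m, M]`: it turns a generator that is
Lipschitz only on the strip `[m, M]` into a globally Lipschitz one. -/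
noncomputable def clampState (hmM : m ≤ M) (F : ℝ → ℝ → ℝ) (t x : ℝ) : ℝ :=
  F t (projIcc m M hmM x)

lemma clampState_of_mem (hmM : m ≤ M) {t x : ℝ} (hx : x ∈ Icc m M) :
    clampState hmM F t x = F t x := by
  rw [clampState, projIcc_of_mem hmM hx]

lemma lipschitzWith_clampState (hmM : m ≤ M) {t : ℝ} (hF : LipschitzOnWith K (F t) (Icc m M)) :
    LipschitzWith K (clampState hmM F t) :=
  mul_one K ▸ hF.to_restrict.comp (LipschitzWith.projIcc hmM)

end Clamp

theorem stmt9_general {a b m M α β ε : ℝ} {K : ℝ≥0} {Fl Fu : ℝ → ℝ → ℝ} (hab : a ≤ b)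
    (hK : 0 < K) (hε : 0 ≤ ε) (hle : ∀ t ∈ Icc a b, ∀ y ∈ Icc m M, Fl t y ≤ Fu t y)
    (hintu : ∀ y ∈ Icc m M, IntervalIntegrable (Fu · y) volume a b)
    (hintl : ∀ y ∈ Icc m M, IntervalIntegrable (Fl · y) volume a b)
    (hLipu : ∀ t ∈ Icc a b, LipschitzOnWith K (Fu t) (Icc m M))
    (hLipl : ∀ t ∈ Icc a b, LipschitzOnWith K (Fl t) (Icc m M))
    (hαβ : α ≤ β) (hFu : ∀ t ∈ Icc a b, Fu t M ≤ ε) (hFl : ∀ t ∈ Icc a b, -ε ≤ Fl t m)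
    (hgapu : ε * (Real.exp (K * (b - a)) - 1) / K ≤ M - β)
    (hgapl : ε * (Real.exp (K * (b - a)) - 1) / K ≤ α - m) :
    ∃ yu yl : ℝ → ℝ, IsBackwardSolution Fu a b β yu ∧ IsBackwardSolution Fl a b α yl ∧
      ∀ t ∈ Icc a b, m ≤ yl t ∧ yl t ≤ yu t ∧ yu t ≤ M := by
  have hgap_nonneg : 0 ≤ ε * (Real.exp (K * (b - a)) - 1) / K := by
    have := Real.one_le_exp (mul_nonneg K.coe_nonneg (sub_nonneg.2 hab))
    exact div_nonneg (mul_nonneg hε (sub_nonneg.2 this)) K.coe_nonneg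
  have hmM : m ≤ M := by linarith
  have hLipu' := fun t ht => lipschitzWith_clampState hmM (hLipu t ht)
  have hLipl' := fun t ht => lipschitzWith_clampState hmM (hLipl t ht)
  obtain ⟨yu, hyu⟩ := exists_isBackwardSolution hab (F := clampState hmM Fu)
    (fun x => hintu _ (projIcc m M hmM x).2) hLipu' β
  obtain ⟨yl, hyl⟩ := exists_isBackwardSolution hab (F := clampState hmM Fl)
    (fun x => hintl _ (projIcc m M hmM x).2) hLipl' α
  have hupper := hyu.le_const hK hε hLipu'
    (by simpa only [clampState_of_mem hmM (right_mem_Icc.2 hmM)] using hFu) hgapu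
  have hlower := hyl.const_le hK hε hLipl'
    (by simpa only [clampState_of_mem hmM (left_mem_Icc.2 hmM)] using hFl) hgapl
  have horder := hyl.le_of_le_of_lipschitzWith hyu hLipl' hαβ
    fun t ht => hle t ht _ (projIcc m M hmM (yu t)).2
  refine ⟨yu, yl, hyu.congr hab fun t ht => clampState_of_mem hmM ?_,
    hyl.congr hab fun t ht => clampState_of_mem hmM ?_,
    fun t ht => ⟨hlower t ht, horder t ht, hupper t ht⟩⟩
  · exact ⟨(hlower t ht).trans (horder t ht), hupper t ht⟩
  · exact ⟨hlower t ht, (horder t ht).trans (hupper t ht)⟩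

/-- Bounded solutions of the dominating ODEs in the case `|σ₃| ≤ c₁`,
`|h| ≤ c₂`, `c₁c₃ < 1` (Theorem 5.7). -/
theorem stmt9
    (T c2 c3 L : ℝ) (hT : 0 < T) (hc2 : 0 < c2) (hc23 : c2 < c3) (hL : 0 < L)
    (Fl Fu : ℝ → ℝ → ℝ)
    (hle : ∀ t ∈ Icc (0:ℝ) T, ∀ y : ℝ, Fl t y ≤ Fu t y)
    (hmeasu : ∀ y : ℝ, Measurable fun t => Fu t y)
    (hmeasl : ∀ y : ℝ, Measurable fun t => Fl t y)
    (hLipu : ∀ t ∈ Icc (0:ℝ) T,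
      LipschitzOnWith (Real.toNNReal L) (fun y => Fu t y) (Icc (-c3) c3))
    (hLipl : ∀ t ∈ Icc (0:ℝ) T,
      LipschitzOnWith (Real.toNNReal L) (fun y => Fl t y) (Icc (-c3) c3))
    (hbdd : ∃ K : ℝ, ∀ t ∈ Icc (0:ℝ) T, ∀ y ∈ Icc (-c3) c3,
      |Fu t y| + |Fl t y| ≤ K)
    (hl hu : ℝ) (hlu : hl ≤ hu) (hhl : |hl| ≤ c2) (hhu : |hu| ≤ c2)
    (ε : ℝ) (hε : 0 < ε)
    (hFu : ∀ t ∈ Icc (0:ℝ) T, Fu t c3 ≤ ε)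
    (hFl : ∀ t ∈ Icc (0:ℝ) T, -ε ≤ Fl t (-c3))
    (hεsmall : ε * (Real.exp (L * T) - 1) / L ≤ c3 - c2) :
    ∃ yu yl : ℝ → ℝ,
      ContinuousOn yu (Icc 0 T) ∧ ContinuousOn yl (Icc 0 T) ∧
      (∀ t ∈ Icc (0:ℝ) T, yu t = hu + ∫ s in t..T, Fu s (yu s)) ∧
      (∀ t ∈ Icc (0:ℝ) T, yl t = hl + ∫ s in t..T, Fl s (yl s)) ∧
      (∀ t ∈ Icc (0:ℝ) T, -c3 ≤ yl t ∧ yl t ≤ yu t ∧ yu t ≤ c3) := by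
  obtain ⟨K, hK⟩ := hbdd
  obtain ⟨yu, yl, hyu, hyl, hbounds⟩ := stmt9_general (K := L.toNNReal) (ε := ε) (Fu := Fu)
    (Fl := Fl) (m := -c3) (M := c3) hT.le (Real.toNNReal_pos.2 hL) hε.le
    (fun t ht y _ => hle t ht y)
    (fun y hy => intervalIntegrable_of_norm_le hT.le (hmeasu y).aestronglyMeasurable fun t ht =>
      (le_add_of_nonneg_right (abs_nonneg _)).trans (hK t ht y hy))
    (fun y hy => intervalIntegrable_of_norm_le hT.le (hmeasl y).aestronglyMeasurable fun t ht =>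
      (le_add_of_nonneg_left (abs_nonneg _)).trans (hK t ht y hy))
    hLipu hLipl hlu hFu hFl
    (by rw [Real.coe_toNNReal L hL.le, sub_zero]; linarith [le_of_abs_le hhu])
    (by rw [Real.coe_toNNReal L hL.le, sub_zero]; linarith [neg_le_of_abs_le hhl])
  exact ⟨yu, yl, hyu.continuousOn hT.le, hyl.continuousOn hT.le, hyu.eq_add_integral,
    hyl.eq_add_integral, hbounds⟩
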